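/- Let $-\frac{3}{2} < c < 0$ be a real number. Then the cubic equation $2E(c-E)^2 + 1 = 0$ has exactly one real solution $E^u$, and it satisfies $-2 < E^u < -2^{-1/3} < 0$; moreover $E^u < c$ and $-2^{-1/3} < E^u - c < -\frac{1}{2}$. -/

import Mathlib

/-!
A root `E` of the cubic is negative, and it lies to the left of `c`: if `c ≤ E < 0`, the cubic is at
least its local minimum `1 + 8c³/27`, attained at `E = c/3`, and this is positive for `c > -3/2`.
To the left of `0` and `c` the cubic is strictly increasing, being `1` minus twice a product of
decreasing nonnegative factors `-E` and `(c - E)²`, so there is at most one root. In terms of the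
angular momentum `L = E - c`, a sign change locates a root with `-2^(-1/3) < L < -1/2`, and the
Kepler relation `E = -1/(2L²)` turns these bounds into `-2 < E < -2^(-1/3)`.
-/

open Set

/-- The cubic in the Kepler energy `E` whose zeros are the Kepler energies of the circular orbits
of the rotating Kepler problem at energy `c`. -/
def circularOrbitCubic (c E : ℝ) : ℝ :=
  2 * E * (c - E) ^ 2 + 1

section

variable {c E r : ℝ}

lemma continuous_circularOrbitCubic (c : ℝ) : Continuous (circularOrbitCubic c) := by
  unfold circularOrbitCubic
  fun_prop

lemma circularOrbitCubic_sub (c r : ℝ) :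
    circularOrbitCubic c (c - r) = 1 - 2 * r ^ 3 + 2 * c * r ^ 2 := by
  unfold circularOrbitCubic
  ring

lemma circularOrbitCubic_pos_of_nonneg (hE : 0 ≤ E) : 0 < circularOrbitCubic c E := by
  unfold circularOrbitCubic
  positivity

lemma circularOrbitCubic_pos_of_le (hc : -(3 / 2) < c) (hcE : c ≤ E) :
    0 < circularOrbitCubic c E := by
  rcases le_or_gt 0 E with hE | hE
  · exact circularOrbitCubic_pos_of_nonneg hE
  have hc_cube : (-(3 / 2)) ^ 3 < c ^ 3 := Odd.strictMono_pow (by decide) hc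
  have h_remainder : 0 ≤ (E - c / 3) ^ 2 * (E - 4 / 3 * c) :=
    mul_nonneg (sq_nonneg _) (by linarith)
  calc
    0 < 1 + 8 / 27 * c ^ 3 := by linarith
    _ ≤ 1 + 8 / 27 * c ^ 3 + 2 * ((E - c / 3) ^ 2 * (E - 4 / 3 * c)) := by linarith
    _ = circularOrbitCubic c E := by unfold circularOrbitCubic; ring

lemma neg_of_circularOrbitCubic_eq_zero (hE : circularOrbitCubic c E = 0) : E < 0 := by
  by_contra! hE_nonneg
  exact (circularOrbitCubic_pos_of_nonneg hE_nonneg).ne' hE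

lemma lt_of_circularOrbitCubic_eq_zero (hc : -(3 / 2) < c) (hE : circularOrbitCubic c E = 0) :
    E < c := by
  by_contra! hcE
  exact (circularOrbitCubic_pos_of_le hc hcE).ne' hE

lemma strictMonoOn_circularOrbitCubic (c : ℝ) :
    StrictMonoOn (circularOrbitCubic c) (Iic (min 0 c)) := by
  intro x _ y hy hxy
  obtain ⟨hy_zero, hyc⟩ := le_min_iff.mp (mem_Iic.mp hy)
  have h_sq : (c - y) ^ 2 < (c - x) ^ 2 :=
    pow_lt_pow_left₀ (by linarith) (by linarith) two_ne_zero
  have h_prod : -y * (c - y) ^ 2 < -x * (c - x) ^ 2 :=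
    mul_lt_mul'' (neg_lt_neg hxy) h_sq (neg_nonneg.mpr hy_zero) (sq_nonneg _)
  unfold circularOrbitCubic
  linarith

lemma subsingleton_setOf_circularOrbitCubic_eq_zero (hc : -(3 / 2) < c) :
    {E | circularOrbitCubic c E = 0}.Subsingleton := by
  have h_mem {E : ℝ} (hE : circularOrbitCubic c E = 0) : E ∈ Iic (min 0 c) :=
    le_min (neg_of_circularOrbitCubic_eq_zero hE).le (lt_of_circularOrbitCubic_eq_zero hc hE).le
  intro x hx y hy
  exact (strictMonoOn_circularOrbitCubic c).injOn (h_mem hx) (h_mem hy) (hx.trans hy.symm)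

lemma sub_ne_zero_of_circularOrbitCubic_eq_zero (hE : circularOrbitCubic c E = 0) :
    E - c ≠ 0 := by
  intro h
  obtain rfl : E = c := sub_eq_zero.mp h
  norm_num [circularOrbitCubic] at hE

lemma eq_neg_one_div_of_circularOrbitCubic_eq_zero (hE : circularOrbitCubic c E = 0) :
    E = -(1 / (2 * (E - c) ^ 2)) := by
  have hL := sub_ne_zero_of_circularOrbitCubic_eq_zero hE
  unfold circularOrbitCubic at hE
  field_simp
  linear_combination hE

lemma lt_neg_one_div_of_abs_sub_lt (hE : circularOrbitCubic c E = 0) (hr : |E - c| < r) :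
    E < -(1 / (2 * r ^ 2)) := by
  have hL := sub_ne_zero_of_circularOrbitCubic_eq_zero hE
  have h_sq : (E - c) ^ 2 < r ^ 2 := sq_lt_sq.mpr (hr.trans_le (le_abs_self r))
  rw [eq_neg_one_div_of_circularOrbitCubic_eq_zero hE]
  gcongr

lemma neg_one_div_lt_of_lt_abs_sub (hE : circularOrbitCubic c E = 0) (hr₀ : 0 < r)
    (hr : r < |E - c|) : -(1 / (2 * r ^ 2)) < E := by
  have h_sq : r ^ 2 < (E - c) ^ 2 := sq_lt_sq.mpr (by rwa [abs_of_pos hr₀])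
  rw [eq_neg_one_div_of_circularOrbitCubic_eq_zero hE]
  gcongr

lemma exists_circularOrbitCubic_eq_zero (hc₁ : -(3 / 2) < c) (hc₂ : c < 0)
    (hr : 2 * r ^ 3 = 1) (hr_half : 1 / 2 < r) :
    ∃ E ∈ Ioo (c - r) (c - 1 / 2), circularOrbitCubic c E = 0 := by
  have h_left : circularOrbitCubic c (c - r) < 0 := by
    have : c * r ^ 2 < 0 := mul_neg_of_neg_of_pos hc₂ (by positivity)
    rw [circularOrbitCubic_sub]
    linarith
  have h_right : 0 < circularOrbitCubic c (c - 1 / 2) := by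
    rw [circularOrbitCubic_sub]
    linarith
  exact intermediate_value_Ioo (by linarith) (continuous_circularOrbitCubic c).continuousOn
    ⟨h_left, h_right⟩

end

lemma two_mul_two_rpow_neg_third_pow_three : 2 * ((2 : ℝ) ^ (-(1 / 3) : ℝ)) ^ 3 = 1 := by
  rw [← Real.rpow_mul_natCast zero_le_two]
  norm_num [Real.rpow_neg_one]

lemma half_lt_two_rpow_neg_third : 1 / 2 < (2 : ℝ) ^ (-(1 / 3) : ℝ) := by
  calc
    (1 / 2 : ℝ) = 2 ^ (-1 : ℝ) := by norm_num [Real.rpow_neg_one]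
    _ < 2 ^ (-(1 / 3) : ℝ) := Real.rpow_lt_rpow_of_exponent_lt one_lt_two (by norm_num)

/-- For `-3/2 < c < 0`, the cubic `2E(c-E)² + 1 = 0` has exactly one real root `Eᵘ`,
which satisfies `-2 < Eᵘ < -2^(-1/3) < 0`, `Eᵘ < c` and `-2^(-1/3) < Eᵘ - c < -1/2`. -/
theorem stmt_2 (c : ℝ) (hc1 : -(3 / 2) < c) (hc2 : c < 0) :
    ∃ E : ℝ, 2 * E * (c - E) ^ 2 + 1 = 0 ∧
      (∀ E' : ℝ, 2 * E' * (c - E') ^ 2 + 1 = 0 → E' = E) ∧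
      -2 < E ∧ E < -(2 : ℝ) ^ (-(1 / 3) : ℝ) ∧ -(2 : ℝ) ^ (-(1 / 3) : ℝ) < 0 ∧
      E < c ∧ -(2 : ℝ) ^ (-(1 / 3) : ℝ) < E - c ∧ E - c < -(1 / 2) := by
  have ha := two_mul_two_rpow_neg_third_pow_three
  have ha_half := half_lt_two_rpow_neg_third
  set a : ℝ := (2 : ℝ) ^ (-(1 / 3) : ℝ)
  obtain ⟨E, ⟨hE_left, hE_right⟩, hE⟩ := exists_circularOrbitCubic_eq_zero hc1 hc2 ha ha_half
  have hEc : E < c := lt_of_circularOrbitCubic_eq_zero hc1 hE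
  have h_abs : |E - c| = c - E := by rw [abs_sub_comm, abs_of_pos (sub_pos.mpr hEc)]
  have hE_lower : -(1 / (2 * (1 / 2) ^ 2)) < E :=
    neg_one_div_lt_of_lt_abs_sub hE one_half_pos (by linarith)
  have hE_upper : E < -(1 / (2 * a ^ 2)) := lt_neg_one_div_of_abs_sub_lt hE (by linarith)
  have ha_inv : 1 / (2 * a ^ 2) = a := by
    rw [div_eq_iff (by positivity)]
    linear_combination -ha
  rw [ha_inv] at hE_upper
  exact ⟨E, hE, fun _ hE' ↦ subsingleton_setOf_circularOrbitCubic_eq_zero hc1 hE' hE,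
    by linarith, hE_upper, by linarith, hEc, by linarith, by linarith⟩
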